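/- In the formal power series ring ℤ[[y]], (1 − y) · Σ_{n≥0} |Rec_n(G,~)|·yⁿ = Σ_{n≥0} |Rec_n(G,~_s)|·yⁿ; equivalently, for every n ∈ ℕ, |Rec_n(G,~)| = Σ_{m=0}^{n} |Rec_m(G,~_s)|. In particular, the polynomial Pc(G,s;y) := Σ_{n≥0} |Rec_n(G,~_s)|·yⁿ does not depend on the choice of the vertex s. -/

import Mathlib

open Finset Polynomial

namespace SandpileBM

variable {V E : Type} [Fintype V] [DecidableEq V] [Fintype E] [DecidableEq E]

/-- The number of edges from `v` to `w` in the multigraph given by `src`, `tgt`. -/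
def numEdges (src tgt : E → V) (v w : V) : ℕ :=
  (Finset.univ.filter fun e => src e = v ∧ tgt e = w).card

/-- The out-degree of a vertex. -/
def outdeg (src : E → V) (v : V) : ℕ :=
  (Finset.univ.filter fun e => src e = v).card

/-- The in-degree of a vertex. -/
def indeg (tgt : E → V) (v : V) : ℕ :=
  (Finset.univ.filter fun e => tgt e = v).card

/-- The digraph is strongly connected: any vertex is reachable from any other by
a directed path. -/
def StronglyConnected (src tgt : E → V) : Prop :=
  ∀ v w : V, Relation.ReflTransGen (fun a b => ∃ e : E, src e = a ∧ tgt e = b) v w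

/-- Result of firing the vertex `v` on the chip configuration `c` (sinkless model). -/
def fire (src tgt : E → V) (c : V → ℕ) (v : V) : V → ℕ :=
  fun w => c w + numEdges src tgt v w - (if w = v then outdeg src v else 0)

/-- One legal firing move in the sinkless model. -/
def FireStep (src tgt : E → V) (c d : V → ℕ) : Prop :=
  ∃ v : V, outdeg src v ≤ c v ∧ d = fire src tgt c v

/-- `Reach c d`: `d` is obtained from `c` by a finite sequence of legal firing moves. -/
def Reach (src tgt : E → V) : (V → ℕ) → (V → ℕ) → Prop :=
  Relation.ReflTransGen (FireStep src tgt)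

/-- Stability of a chip configuration. -/
def Stable (src : E → V) (c : V → ℕ) : Prop :=
  ∀ v : V, c v < outdeg src v

/-- A chip configuration is recurrent if it is not stable and every configuration
accessible from it can reach it back. -/
def Recurrent (src tgt : E → V) (c : V → ℕ) : Prop :=
  ¬ Stable src c ∧ ∀ d : V → ℕ, Reach src tgt c d → Reach src tgt d c

/-- Level (total number of chips) of a chip configuration. -/
def lvl (c : V → ℕ) : ℕ := ∑ v : V, c v

/-- Indicator function of the vertex `s`. -/
def deltaS (s : V) : V → ℕ := fun v => if v = s then 1 else 0

/-- Result of firing the vertex `v` on an `s`-configuration. -/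
def sfire (src tgt : E → V) (s : V) (c : {v : V // v ≠ s} → ℕ) (v : {v : V // v ≠ s}) :
    {v : V // v ≠ s} → ℕ :=
  fun w => c w + numEdges src tgt v.1 w.1 - (if w = v then outdeg src v.1 else 0)

/-- One legal s-firing move. -/
def SFireStep (src tgt : E → V) (s : V) (c d : {v : V // v ≠ s} → ℕ) : Prop :=
  ∃ v : {v : V // v ≠ s}, outdeg src v.1 ≤ c v ∧ d = sfire src tgt s c v

/-- `SReach c d`: `d` is obtained from `c` by a finite sequence of legal s-firing moves. -/
def SReach (src tgt : E → V) (s : V) :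
    ({v : V // v ≠ s} → ℕ) → ({v : V // v ≠ s} → ℕ) → Prop :=
  Relation.ReflTransGen (SFireStep src tgt s)

/-- Stability of an `s`-configuration. -/
def SStable (src : E → V) (s : V) (c : {v : V // v ≠ s} → ℕ) : Prop :=
  ∀ v : {v : V // v ≠ s}, c v < outdeg src v.1

/-- The stabilization `c°` of an `s`-configuration: the (for strongly connected digraphs,
unique) stable `s`-configuration reachable from `c` by legal s-firing moves. -/
noncomputable def stab (src tgt : E → V) (s : V) (c : {v : V // v ≠ s} → ℕ) :
    {v : V // v ≠ s} → ℕ :=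
  Classical.epsilon fun d => SReach src tgt s c d ∧ SStable src s d

/-- An `s`-configuration `c` is s-recurrent if every `s`-configuration can be completed
to one whose stabilization is `c`. -/
def SRecurrent (src tgt : E → V) (s : V) (c : {v : V // v ≠ s} → ℕ) : Prop :=
  ∀ c₁ : {v : V // v ≠ s} → ℕ, ∃ c₂ : {v : V // v ≠ s} → ℕ,
    stab src tgt s (c₁ + c₂) = c

/-- `β_s`, recording the number of edges from `s` to each other vertex. -/
def betaS (src tgt : E → V) (s : V) : {v : V // v ≠ s} → ℕ :=
  fun v => numEdges src tgt s v.1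

/-- The relation `~_s` on s-recurrent configurations: `d = (c + k·β_s)°` for some `k`. -/
def SEquiv (src tgt : E → V) (s : V) (c d : {v : V // v ≠ s} → ℕ) : Prop :=
  ∃ k : ℕ, stab src tgt s (c + k • betaS src tgt s) = d

/-- Restriction of a chip configuration to `V ∖ {s}`. -/
def restrictS (s : V) (c : V → ℕ) : {v : V // v ≠ s} → ℕ := fun v => c v.1

/-- Extension `c̄` of an `s`-configuration by `0` at `s`. -/
def extendS (s : V) (c : {v : V // v ≠ s} → ℕ) : V → ℕ :=
  fun v => if h : v = s then 0 else c ⟨v, h⟩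

/-- The s-index `χ(c)`: the least `k` such that `c̄ + k·δ_s` is recurrent. -/
noncomputable def sIndex (src tgt : E → V) (s : V) (c : {v : V // v ≠ s} → ℕ) : ℕ :=
  sInf {k : ℕ | Recurrent src tgt (extendS s c + k • deltaS s)}

/-- `φ(c) := c̄ + χ(c)·δ_s`. -/
noncomputable def phi (src tgt : E → V) (s : V) (c : {v : V // v ≠ s} → ℕ) : V → ℕ :=
  extendS s c + sIndex src tgt s c • deltaS s

/-- The s-level `slvl(c) := χ(c) + Σ_{v ≠ s} c(v)`. -/
noncomputable def slvl (src tgt : E → V) (s : V) (c : {v : V // v ≠ s} → ℕ) : ℕ :=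
  sIndex src tgt s c + ∑ v : {v : V // v ≠ s}, c v

/-- The d-level `dlvl(c) := deg⁺(s) + Σ_{v ≠ s} c(v)`. -/
def dlvl (src : E → V) (s : V) (c : {v : V // v ≠ s} → ℕ) : ℕ :=
  outdeg src s + ∑ v : {v : V // v ≠ s}, c v

/-- The set (as a type) of recurrent chip configurations. -/
abbrev RecL (src tgt : E → V) := {c : V → ℕ // Recurrent src tgt c}

/-- The setoid on recurrent configurations generated by the relation `~` (i.e. `⤳`). -/
def recLSetoid (src tgt : E → V) : Setoid (RecL src tgt) :=
  Relation.EqvGen.setoid fun a b => Reach src tgt a.1 b.1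

/-- The set of `~`-classes of recurrent configurations. -/
abbrev RecLQuot (src tgt : E → V) := Quotient (recLSetoid src tgt)

/-- The set (as a type) of s-recurrent configurations. -/
abbrev RecS (src tgt : E → V) (s : V) := {c : {v : V // v ≠ s} → ℕ // SRecurrent src tgt s c}

/-- The setoid on s-recurrent configurations generated by the relation `~_s`. -/
def recSSetoid (src tgt : E → V) (s : V) : Setoid (RecS src tgt s) :=
  Relation.EqvGen.setoid fun a b => SEquiv src tgt s a.1 b.1

/-- The set of `~_s`-classes of s-recurrent configurations. -/
abbrev RecSQuot (src tgt : E → V) (s : V) := Quotient (recSSetoid src tgt s)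

/-- The level of a `~`-class of recurrent configurations (level is constant on classes). -/
noncomputable def lvlClass (src tgt : E → V) (q : RecLQuot src tgt) : ℕ :=
  sSup ((fun c : RecL src tgt => lvl c.1) '' {c | Quotient.mk (recLSetoid src tgt) c = q})

/-- The s-level of a `~_s`-class (s-level is constant on classes). -/
noncomputable def slvlClass (src tgt : E → V) (s : V) (q : RecSQuot src tgt s) : ℕ :=
  sSup ((fun c : RecS src tgt s => slvl src tgt s c.1) ''
    {c | Quotient.mk (recSSetoid src tgt s) c = q})

/-- The d-level of a `~_s`-class: the maximum d-level over the class. -/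
noncomputable def dlvlClass (src tgt : E → V) (s : V) (q : RecSQuot src tgt s) : ℕ :=
  sSup ((fun c : RecS src tgt s => dlvl src s c.1) ''
    {c | Quotient.mk (recSSetoid src tgt s) c = q})

/-- The Biggs–Merino polynomial `B(G,s;y) = Σ_{[c] ∈ Rec(G,s)/~_s} y^{dlvl([c])}`. -/
noncomputable def BM (src tgt : E → V) (s : V) : Polynomial ℤ :=
  ∑ᶠ q : RecSQuot src tgt s, X ^ dlvlClass src tgt s q

/-- `LegalSeq l c d`: firing the vertices in the list `l` in order is a sequence of
legal firing moves transforming `c` into `d` (sinkless model). -/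
def LegalSeq (src tgt : E → V) : List V → (V → ℕ) → (V → ℕ) → Prop
  | [], c, d => d = c
  | v :: l, c, d => outdeg src v ≤ c v ∧ LegalSeq src tgt l (fire src tgt c v) d

/-- `SLegalSeq l c d`: firing the vertices in the list `l` in order is a sequence of
legal s-firing moves transforming `c` into `d`. -/
def SLegalSeq (src tgt : E → V) (s : V) :
    List {v : V // v ≠ s} → ({v : V // v ≠ s} → ℕ) → ({v : V // v ≠ s} → ℕ) → Prop
  | [], c, d => d = c
  | v :: l, c, d => outdeg src v.1 ≤ c v ∧ SLegalSeq src tgt s l (sfire src tgt s c v) d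

/-- The configuration obtained from `c` after firing the vertices of `l` in order. -/
def iterFire (src tgt : E → V) (c : V → ℕ) (l : List V) : V → ℕ :=
  l.foldl (fire src tgt) c

/-- The Laplacian of the digraph applied to an integer vector:
`(Δq)(v) = deg⁺(v)·q(v) − Σ_w A(w,v)·q(w)`. -/
def lapApply (src tgt : E → V) (q : V → ℤ) : V → ℤ :=
  fun v => (outdeg src v : ℤ) * q v - ∑ w : V, (numEdges src tgt w v : ℤ) * q w

/-- `r` is the primitive period vector of the digraph: it has positive entries with
gcd `1`, lies in the kernel of the Laplacian, and generates this kernel. -/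
def IsPeriodVector (src tgt : E → V) (r : V → ℕ) : Prop :=
  (∀ v : V, 0 < r v) ∧ Finset.univ.gcd r = 1 ∧
    lapApply src tgt (fun v => (r v : ℤ)) = 0 ∧
    ∀ q : V → ℤ, lapApply src tgt q = 0 → ∃ k : ℤ, q = k • fun v => (r v : ℤ)

/-- The Laplacian matrix of the digraph. -/
def lapMatrix (src tgt : E → V) : Matrix V V ℤ :=
  Matrix.of fun v w =>
    if v = w then (outdeg src v : ℤ) - numEdges src tgt v v
    else -(numEdges src tgt w v : ℤ)

/-- The determinant of the reduced Laplacian obtained by deleting the row and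
column indexed by `v`. -/
def reducedLapDet (src tgt : E → V) (v : V) : ℤ :=
  (((lapMatrix src tgt).submatrix (fun a : {w : V // w ≠ v} => a.1)
    (fun a : {w : V // w ≠ v} => a.1)).det)

/-- The period constant `α := gcd_{v ∈ V} det Δ_v`. -/
def periodConstant (src tgt : E → V) : ℤ :=
  Finset.univ.gcd (reducedLapDet src tgt)

/-- `IsWalk l a b`: the list of edges `l` forms a directed walk from `a` to `b`. -/
def IsWalk (src tgt : E → V) : List E → V → V → Prop
  | [], a, b => a = b
  | e :: l, a, b => src e = a ∧ IsWalk src tgt l (tgt e) b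

/-- `IsPath l a b`: the list of edges `l` forms a directed path from `a` to `b`:
all visited vertices are distinct (except that the final vertex is allowed to
coincide with the starting vertex). -/
def IsPath (src tgt : E → V) (l : List E) (a b : V) : Prop :=
  IsWalk src tgt l a b ∧ (l.map tgt).Nodup ∧ a ∉ (l.map tgt).dropLast

/-- `T` is an arborescence rooted at `s`: for every vertex `v` there is a unique
directed path from `s` to `v` using only edges of `T`. -/
def IsArborescence (src tgt : E → V) (s : V) (T : Finset E) : Prop :=
  ∀ v : V, ∃! l : List E, (∀ e ∈ l, e ∈ T) ∧ IsPath src tgt l s v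

/-- The edge `e ∉ T` is externally active for the arborescence `T` (w.r.t. the linear
order on `E`): where `P₁`, `P₂` are the two edge-disjoint directed paths in `T ∪ {e}`
sharing their starting vertex and ending at `tgt e`, with `e ∈ P₁`, the smallest edge
on `P₁ ++ P₂` lies on `P₁`. -/
def ExtActive [LinearOrder E] (src tgt : E → V) (T : Finset E) (e : E) : Prop :=
  e ∉ T ∧ ∃ (u : V) (p₁ p₂ : List E),
    (∀ f ∈ p₁, f ∈ T ∨ f = e) ∧ (∀ f ∈ p₂, f ∈ T ∨ f = e) ∧
    IsPath src tgt p₁ u (tgt e) ∧ IsPath src tgt p₂ u (tgt e) ∧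
    e ∈ p₁ ∧ (∀ f ∈ p₁, f ∉ p₂) ∧
    ∃ fmin ∈ p₁, ∀ f ∈ p₁ ++ p₂, fmin ≤ f

/-- The external activity `e(T)` of an arborescence `T`. -/
noncomputable def extActivity [LinearOrder E] (src tgt : E → V) (T : Finset E) : ℕ :=
  Nat.card {e : E // ExtActive src tgt T e}

/-- The greedoid Tutte polynomial `T(G,s;y) = Σ_{T ∈ A(G,s)} y^{e(T)}`. -/
noncomputable def greedoidTutte [LinearOrder E] (src tgt : E → V) (s : V) : Polynomial ℤ :=
  ∑ᶠ T : {T : Finset E // IsArborescence src tgt s T}, X ^ extActivity src tgt T.1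

/-- `f` is a `G^r`-parking function rooted at `s`. -/
def IsParking (src tgt : E → V) (s : V) (f : {v : V // v ≠ s} → ℕ) : Prop :=
  ∀ A : Finset {v : V // v ≠ s}, A.Nonempty →
    ∃ v ∈ A, f v < Nat.card {e : E // (∀ w ∈ A, src e ≠ w.1) ∧ tgt e = v.1}

/-- The d-level of a `G^r`-parking function: `|E| − |V| + 1 − Σ_{v≠s} f(v)`. -/
noncomputable def parkDlvl (src : E → V) (s : V) (f : {v : V // v ≠ s} → ℕ) : ℕ :=
  ((Fintype.card E : ℤ) - Fintype.card V + 1 - ∑ v : {v : V // v ≠ s}, (f v : ℤ)).toNat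

/-- `σ` is an s-decreasing traversal: a sequence in which every vertex and edge of `G`
appears exactly once, satisfying (R1) every vertex other than `s` is immediately
preceded by an edge targeting it, and (R2) every edge is the `<ₑ`-maximum edge not yet
seen whose source has been seen. -/
def IsTraversal [LinearOrder E] (src tgt : E → V) (s : V) (σ : List (V ⊕ E)) : Prop :=
  σ.Nodup ∧ (∀ x : V ⊕ E, x ∈ σ) ∧
  (∀ (i : ℕ) (hi : i < σ.length) (v : V),
      σ.get ⟨i, hi⟩ = Sum.inl v → v ≠ s →
      0 < i ∧ ∃ e : E, tgt e = v ∧ σ.get ⟨i - 1, by omega⟩ = Sum.inr e) ∧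
  (∀ (i : ℕ) (hi : i < σ.length) (e : E),
      σ.get ⟨i, hi⟩ = Sum.inr e →
      Sum.inl (src e) ∈ σ.take i ∧
      ∀ f : E, Sum.inr f ∉ σ.take i → Sum.inl (src f) ∈ σ.take i → f ≤ e)

open scoped Classical in
/-- `Υ(σ)`: the set of edges immediately preceding a non-sink vertex in `σ`. -/
noncomputable def Upsilon (src tgt : E → V) (s : V) (σ : List (V ⊕ E)) : Finset E :=
  Finset.univ.filter fun e =>
    ∃ (i : ℕ) (hi : i < σ.length) (v : V), v ≠ s ∧ σ.get ⟨i, hi⟩ = Sum.inl v ∧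
      0 < i ∧ ∃ hj : i - 1 < σ.length, σ.get ⟨i - 1, hj⟩ = Sum.inr e

/-- The strength of `σ`: the number of strong edges, i.e. edges whose target appears
before them in `σ`. -/
noncomputable def strength (tgt : E → V) (σ : List (V ⊕ E)) : ℕ :=
  Nat.card {e : E // ∃ (i : ℕ) (hi : i < σ.length),
    σ.get ⟨i, hi⟩ = Sum.inr e ∧ Sum.inl (tgt e) ∈ σ.take i}

/-- `Ψ(σ)(v)`: one less than the number of edges targeting `v` that appear before the
vertex `v` in `σ`. -/
def Psi (tgt : E → V) (s : V) (σ : List (V ⊕ E)) : {v : V // v ≠ s} → ℕ :=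
  fun v =>
    (((σ.takeWhile fun x => x ≠ Sum.inl v.1).filterMap Sum.getRight?).filter
      fun e => tgt e = v.1).length - 1

/-- The generating function `Rc(G;y) = Σ_{n≥0} |Rec_n(G,~)|·yⁿ` of the sinkless model. -/
noncomputable def RcSeries (src tgt : E → V) : PowerSeries ℤ :=
  PowerSeries.mk fun n => (Nat.card {q : RecLQuot src tgt // lvlClass src tgt q = n} : ℤ)

/-- The generating function `Pc(G,s;y) = Σ_{n≥0} |Rec_n(G,~_s)|·yⁿ`. -/
noncomputable def PcSeries (src tgt : E → V) (s : V) : PowerSeries ℤ :=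
  PowerSeries.mk fun n =>
    (Nat.card {q : RecSQuot src tgt s // slvlClass src tgt s q = n} : ℤ)

set_option linter.unusedSectionVars false

/-! ### Counted firing sequences -/

/-- `FR c x d`: some legal sequence of firings leads from `c` to `d`, and fires each vertex
`v` exactly `x v` times. -/
inductive FR (src tgt : E → V) : (V → ℕ) → (V → ℕ) → (V → ℕ) → Prop
  | refl (c : V → ℕ) : FR src tgt c 0 c
  | head {c x d : V → ℕ} (v : V) (h : outdeg src v ≤ c v)
      (h' : FR src tgt (fire src tgt c v) x d) : FR src tgt c (x + Pi.single v 1) d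

theorem fire_spec (src tgt : E → V) (c : V → ℕ) (v : V) (h : outdeg src v ≤ c v) (w : V) :
    fire src tgt c v w + (if w = v then outdeg src v else 0) = c w + numEdges src tgt v w := by
  unfold fire
  by_cases hw : w = v
  · subst hw; simp; omega
  · simp [hw]

theorem fire_le (src tgt : E → V) (c : V → ℕ) (v w : V) (hw : w ≠ v) :
    c w ≤ fire src tgt c v w := by
  unfold fire; simp [hw]

theorem fire_comm (src tgt : E → V) (c : V → ℕ) (u v : V) (huv : u ≠ v)
    (hu : outdeg src u ≤ c u) (hv : outdeg src v ≤ c v) :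
    fire src tgt (fire src tgt c u) v = fire src tgt (fire src tgt c v) u := by
  funext w
  unfold fire
  by_cases h1 : w = u
  · subst h1; simp [huv]; omega
  · by_cases h2 : w = v
    · subst h2; simp [h1]; omega
    · simp [h1, h2]; omega

theorem fire_add (src tgt : E → V) (c e : V → ℕ) (v : V) (h : outdeg src v ≤ c v) :
    fire src tgt (c + e) v = fire src tgt c v + e := by
  funext w
  unfold fire
  by_cases h1 : w = v
  · subst h1; simp; omega
  · simp [h1]; omega

theorem sum_numEdges (src tgt : E → V) (v : V) : ∑ w, numEdges src tgt v w = outdeg src v := by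
  unfold numEdges outdeg
  rw [Finset.card_eq_sum_card_fiberwise (f := tgt) (t := Finset.univ) (by simp)]
  refine Finset.sum_congr rfl fun w _ => ?_
  rw [Finset.filter_filter]

theorem lvl_fire (src tgt : E → V) (c : V → ℕ) (v : V) (h : outdeg src v ≤ c v) :
    lvl (fire src tgt c v) = lvl c := by
  have h1 := Finset.sum_congr (s₁ := (Finset.univ : Finset V)) rfl
    (fun w _ => fire_spec src tgt c v h w)
  rw [Finset.sum_add_distrib, Finset.sum_add_distrib, sum_numEdges] at h1
  simp at h1
  exact h1

theorem FR.lvl_eq {src tgt : E → V} {c x d : V → ℕ} (h : FR src tgt c x d) : lvl d = lvl c := by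
  induction h with
  | refl c => rfl
  | head v h h' ih => rw [ih, lvl_fire _ _ _ _ h]

theorem FR.trans {src tgt : E → V} {c x d y e : V → ℕ} (h : FR src tgt c x d)
    (h2 : FR src tgt d y e) : FR src tgt c (x + y) e := by
  induction h with
  | refl c => simpa using h2
  | head v h h' ih =>
    have := FR.head v h (ih h2)
    rwa [add_right_comm] at this

theorem FR.add {src tgt : E → V} {c x d : V → ℕ} (h : FR src tgt c x d) (e : V → ℕ) :
    FR src tgt (c + e) x (d + e) := by
  induction h with
  | refl c => exact FR.refl _
  | @head c x d v h h' ih =>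
    refine FR.head v (le_trans h (by simp)) ?_
    rwa [fire_add _ _ _ _ _ h]

theorem FR.mono_add {src tgt : E → V} {c x d c' x' d' : V → ℕ} (h : FR src tgt c x d)
    (h' : FR src tgt c' x' d') : FR src tgt (c + c') (x + x') (d + d') := by
  have h1 := h.add c'
  have h2 := h'.add d
  rw [add_comm c' d, add_comm d' d] at h2
  exact h1.trans h2

theorem FR.smul {src tgt : E → V} {c x d : V → ℕ} (h : FR src tgt c x d) (n : ℕ) :
    FR src tgt (n • c) (n • x) (n • d) := by
  induction n with
  | zero => simpa using FR.refl _
  | succ n ih => rw [succ_nsmul, succ_nsmul, succ_nsmul]; exact ih.mono_add h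

theorem FR.iter {src tgt : E → V} {c p : V → ℕ} (h : FR src tgt c p c) (n : ℕ) :
    FR src tgt c (n • p) c := by
  induction n with
  | zero => simpa using FR.refl c
  | succ n ih => rw [succ_nsmul]; exact ih.trans h

theorem FR.flow {src tgt : E → V} {c x d : V → ℕ} (h : FR src tgt c x d) (w : V) :
    d w + x w * outdeg src w = c w + ∑ v, x v * numEdges src tgt v w := by
  induction h with
  | refl c => simp
  | @head c x d v h h' ih =>
    have := fire_spec src tgt c v h w
    have e1 : ∑ u, (x + Pi.single v 1 : V → ℕ) u * numEdges src tgt u w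
        = ∑ u, x u * numEdges src tgt u w + numEdges src tgt v w := by
      simp [add_mul, Finset.sum_add_distrib, Pi.single_apply]
    rw [e1]
    by_cases hw : w = v
    · subst hw
      simp [add_mul] at this ⊢
      omega
    · simp [hw] at this ⊢
      omega

theorem FR.reach {src tgt : E → V} {c x d : V → ℕ} (h : FR src tgt c x d) :
    Reach src tgt c d := by
  induction h with
  | refl c => exact Relation.ReflTransGen.refl
  | head v h h' ih => exact Relation.ReflTransGen.head ⟨v, h, rfl⟩ ih

theorem Reach.exists_FR {src tgt : E → V} {c d : V → ℕ} (h : Reach src tgt c d) :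
    ∃ x, FR src tgt c x d := by
  induction h using Relation.ReflTransGen.head_induction_on with
  | refl => exact ⟨0, FR.refl _⟩
  | head h h' ih =>
    obtain ⟨v, hv, rfl⟩ := h
    obtain ⟨x, hx⟩ := ih
    exact ⟨_, FR.head v hv hx⟩

theorem FR.one_step {src tgt : E → V} {c x d : V → ℕ} (h : FR src tgt c x d) :
    ∀ v, outdeg src v ≤ c v →
    (x v = 0 ∧ outdeg src v ≤ d v ∧ FR src tgt (fire src tgt c v) x (fire src tgt d v)) ∨
    (∃ x', x = x' + Pi.single v 1 ∧ FR src tgt (fire src tgt c v) x' d) := by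
  induction h with
  | refl c => intro v hv; exact Or.inl ⟨rfl, hv, FR.refl _⟩
  | @head c x d u hu h' ih =>
    intro v hv
    by_cases huv : u = v
    · subst huv; exact Or.inr ⟨x, rfl, h'⟩
    · have hv1 : outdeg src v ≤ fire src tgt c u v := hv.trans (fire_le _ _ _ _ _ (Ne.symm huv))
      have hu1 : outdeg src u ≤ fire src tgt c v u := hu.trans (fire_le _ _ _ _ _ huv)
      rcases ih v hv1 with ⟨h1, h2, h3⟩ | ⟨x', h1, h3⟩
      · left
        refine ⟨by simp [h1, Ne.symm huv], h2, ?_⟩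
        rw [fire_comm _ _ _ _ _ huv hu hv] at h3
        exact FR.head u hu1 h3
      · right
        refine ⟨x' + Pi.single u 1, by rw [h1, add_right_comm], ?_⟩
        rw [fire_comm _ _ _ _ _ huv hu hv] at h3
        exact FR.head u hu1 h3

theorem FR.diamond {src tgt : E → V} {c y e : V → ℕ} (h : FR src tgt c y e) :
    ∀ {x d : V → ℕ}, FR src tgt c x d →
      ∃ f, FR src tgt d (y - x) f ∧ FR src tgt e (x - y) f := by
  induction h with
  | refl c =>
    intro x d hx
    exact ⟨d, by simpa using FR.refl d, by simpa using hx⟩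
  | @head c y e v hv h' ih =>
    intro x d hx
    rcases hx.one_step v hv with ⟨h1, h2, h3⟩ | ⟨x', rfl, h3⟩
    · obtain ⟨f, hf1, hf2⟩ := ih h3
      refine ⟨f, ?_, ?_⟩
      · have : y + Pi.single v 1 - x = (y - x) + Pi.single v 1 := by
          funext w
          by_cases hw : w = v
          · subst hw; simp [h1]
          · simp [hw]
        rw [this]
        exact FR.head v h2 hf1
      · have : x - (y + Pi.single v 1) = x - y := by
          funext w
          by_cases hw : w = v
          · subst hw; simp [h1]
          · simp [hw]
        rwa [this]
    · obtain ⟨f, hf1, hf2⟩ := ih h3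
      refine ⟨f, ?_, ?_⟩
      · rwa [add_tsub_add_eq_tsub_right]
      · rwa [add_tsub_add_eq_tsub_right]

theorem FR.zero_eq {src tgt : E → V} {c x d : V → ℕ} (h : FR src tgt c x d) (hx : x = 0) :
    d = c := by
  cases h with
  | refl => rfl
  | head v h h' =>
    have := congrFun hx v
    simp at this

theorem FR.of_le {src tgt : E → V} {c x d y e : V → ℕ} (h : FR src tgt c x d)
    (h' : FR src tgt c y e) (hxy : x ≤ y) : FR src tgt d (y - x) e := by
  obtain ⟨f, hf1, hf2⟩ := h'.diamond h
  rwa [hf2.zero_eq (tsub_eq_zero_of_le hxy)] at hf1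

theorem FR.take_upto {src tgt : E → V} {c y d : V → ℕ} (s : V) (h : FR src tgt c y d) :
    ∀ m ≤ y s, ∃ x e, FR src tgt c x e ∧ x s = m := by
  induction h with
  | refl c => intro m hm; exact ⟨0, c, FR.refl _, by simp at hm; simp [hm]⟩
  | @head c y d v hv h' ih =>
    intro m hm
    rcases Nat.eq_zero_or_pos m with rfl | hm0
    · exact ⟨0, c, FR.refl _, rfl⟩
    · by_cases hs : s = v
      · subst hs
        obtain ⟨x, e, h1, h2⟩ := ih (m - 1) (by simp at hm; omega)
        exact ⟨_, e, FR.head s hv h1, by simp [h2]; omega⟩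
      · obtain ⟨x, e, h1, h2⟩ := ih m (by simpa [hs] using hm)
        exact ⟨_, e, FR.head v hv h1, by simp [h2, hs]⟩

theorem numEdges_pos {src tgt : E → V} {a b : V} (h : ∃ e : E, src e = a ∧ tgt e = b) :
    0 < numEdges src tgt a b := by
  obtain ⟨e, he⟩ := h
  exact Finset.card_pos.2 ⟨e, by simp [he]⟩

theorem FR.loop_pos {src tgt : E → V} (hG : StronglyConnected src tgt) {c p : V → ℕ}
    (h : FR src tgt c p c) (hp : p ≠ 0) (w : V) : 0 < p w := by
  obtain ⟨v, hv⟩ : ∃ v, p v ≠ 0 := by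
    by_contra hcon; push Not at hcon; exact hp (funext hcon)
  have hvw := hG v w
  induction hvw with
  | refl => omega
  | @tail a b _ hab ih =>
    have h1 := h.flow b
    have h2 := numEdges_pos hab
    have h3 : p a * numEdges src tgt a b ≤ ∑ v, p v * numEdges src tgt v b :=
      Finset.single_le_sum (f := fun v => p v * numEdges src tgt v b)
        (fun _ _ => Nat.zero_le _) (Finset.mem_univ a)
    by_contra hcon
    have h4 : p b = 0 := by omega
    have h5 := Nat.mul_pos ih h2
    simp [h4] at h1
    have h6 := h1 a
    rcases h6 with h6 | h6 <;> omega

/-! ### Recurrent configurations -/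

theorem recurrent_iff {src tgt : E → V} (hG : StronglyConnected src tgt) (c : V → ℕ) :
    Recurrent src tgt c ↔ ∃ p, p ≠ 0 ∧ FR src tgt c p c := by
  constructor
  · rintro ⟨h1, h2⟩
    unfold Stable at h1
    push Not at h1
    obtain ⟨v, hv⟩ := h1
    have h3 := (h2 _ (Relation.ReflTransGen.single ⟨v, hv, rfl⟩))
    obtain ⟨x, hx⟩ := h3.exists_FR
    refine ⟨_, ?_, FR.head v hv hx⟩
    intro h
    have := congrFun h v
    simp at this
  · rintro ⟨p, hp, h⟩
    refine ⟨?_, ?_⟩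
    · intro hs
      cases h with
      | refl => exact hp rfl
      | head v hv _ => exact absurd (hs v) (by omega)
    · intro d hd
      obtain ⟨x, hx⟩ := hd.exists_FR
      have hle : x ≤ (∑ v, x v) • p := by
        intro v
        have h1 : x v ≤ ∑ v, x v :=
          Finset.single_le_sum (f := x) (fun _ _ => Nat.zero_le _) (Finset.mem_univ v)
        have h2 := h.loop_pos hG hp v
        simp only [Pi.smul_apply, smul_eq_mul]
        nlinarith
      exact (hx.of_le (h.iter _) hle).reach

theorem Recurrent.of_reach {src tgt : E → V} {c d : V → ℕ} (hc : Recurrent src tgt c)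
    (h : Reach src tgt c d) : Recurrent src tgt d := by
  have hdc := hc.2 d h
  refine ⟨?_, fun e he => (hc.2 e (h.trans he)).trans h⟩
  intro hs
  obtain ⟨x, hx⟩ := hdc.exists_FR
  cases hx with
  | refl => exact hc.1 hs
  | head v hv _ => exact absurd (hs v) (by omega)

theorem Recurrent.add {src tgt : E → V} (hG : StronglyConnected src tgt) {c : V → ℕ}
    (hc : Recurrent src tgt c) (e : V → ℕ) : Recurrent src tgt (c + e) := by
  rw [recurrent_iff hG] at hc ⊢
  obtain ⟨p, hp, h⟩ := hc
  exact ⟨p, hp, h.add e⟩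

/-! ### Relation with the sink model -/

theorem SReach.add {src tgt : E → V} {s : V} {c d : {v : V // v ≠ s} → ℕ}
    (h : SReach src tgt s c d) (e : {v : V // v ≠ s} → ℕ) :
    SReach src tgt s (c + e) (d + e) := by
  refine Relation.ReflTransGen.lift (fun c => c + e) ?_ _ _ h
  rintro a b ⟨v, hv, rfl⟩
  refine ⟨v, hv.trans (by simp), ?_⟩
  funext w
  unfold sfire
  by_cases h1 : w = v
  · subst h1; simp; omega
  · simp [h1]; omega

theorem FR.project {src tgt : E → V} (s : V) {c x d : V → ℕ} (h : FR src tgt c x d) :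
    SReach src tgt s (restrictS s c + x s • betaS src tgt s) (restrictS s d) := by
  induction h with
  | refl c =>
    simp only [Pi.zero_apply, zero_smul, add_zero]
    exact Relation.ReflTransGen.refl
  | @head c x d v hv h' ih =>
    by_cases hs : s = v
    · subst hs
      convert ih using 1
      funext w
      simp [restrictS, betaS, fire, w.2, add_mul]
      omega
    · have e1 : (x + Pi.single v 1 : V → ℕ) s = x s := by simp [hs]
      rw [e1]
      refine Relation.ReflTransGen.trans (SReach.add (Relation.ReflTransGen.single ?_) _) ih
      refine ⟨⟨v, Ne.symm hs⟩, hv, ?_⟩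
      funext w
      simp [restrictS, sfire, fire, Subtype.ext_iff]

theorem SReach.lift_FR {src tgt : E → V} {s : V} {a b : {v : V // v ≠ s} → ℕ}
    (h : SReach src tgt s a b) : ∀ c, restrictS s c = a →
    ∃ x d, FR src tgt c x d ∧ x s = 0 ∧ restrictS s d = b := by
  induction h using Relation.ReflTransGen.head_induction_on with
  | refl => intro c hc; exact ⟨0, c, FR.refl _, rfl, hc⟩
  | head h h' ih =>
    obtain ⟨v, hv, rfl⟩ := h
    intro c hc
    subst hc
    obtain ⟨x, d, h1, h2, h3⟩ := ih (fire src tgt c v.1) (by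
      funext w
      simp [restrictS, sfire, fire, Subtype.ext_iff])
    exact ⟨_, d, FR.head v.1 hv h1, by simp [h2, Ne.symm v.2], h3⟩

theorem FR.of_sstable {src tgt : E → V} {s : V} {c x d : V → ℕ} (h : FR src tgt c x d)
    (hx : x s = 0) (hc : SStable src s (restrictS s c)) : d = c := by
  cases h with
  | refl => rfl
  | head v hv h' =>
    by_cases hs : s = v
    · subst hs; simp at hx
    · have := hc ⟨v, Ne.symm hs⟩
      simp [restrictS] at this
      omega

theorem finite_lvl (n : ℕ) : Finite {c : V → ℕ // lvl c = n} := by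
  have : Set.Finite {c : V → ℕ | lvl c = n} := by
    refine (Set.finite_Iic (fun _ : V => n)).subset ?_
    intro c hc v
    have h1 : c v ≤ ∑ v, c v :=
      Finset.single_le_sum (f := c) (fun _ _ => Nat.zero_le _) (Finset.mem_univ v)
    have h2 : ∑ v, c v = n := hc
    show c v ≤ n
    omega
  exact this.to_subtype

theorem exists_sstab {src tgt : E → V} (hG : StronglyConnected src tgt) (s : V) (c : V → ℕ) :
    ∃ x d, FR src tgt c x d ∧ x s = 0 ∧ SStable src s (restrictS s d) := by
  have := finite_lvl (V := V) (lvl c)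
  let r : {d : V → ℕ // lvl d = lvl c} → {d : V → ℕ // lvl d = lvl c} → Prop :=
    fun a b => ∃ x, x ≠ 0 ∧ x s = 0 ∧ FR src tgt b.1 x a.1
  have htr : IsTrans _ r := ⟨by
    rintro a b c ⟨x, hx, hxs, h⟩ ⟨y, hy, hys, h'⟩
    refine ⟨y + x, ?_, by simp [hxs, hys], h'.trans h⟩
    intro h0
    apply hx
    funext v
    have := congrFun h0 v
    simp at this
    simp [this.2]⟩
  have hirr : Std.Irrefl r := ⟨by
    rintro a ⟨x, hx, hxs, h⟩
    have := h.loop_pos hG hx s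
    omega⟩
  have hwf : WellFounded r := Finite.wellFounded_of_trans_of_irrefl r
  have key : ∀ a : {d : V → ℕ // lvl d = lvl c},
      ∃ x d, FR src tgt a.1 x d ∧ x s = 0 ∧ SStable src s (restrictS s d) := by
    intro a
    induction a using hwf.induction with
    | _ a ih =>
      by_cases hst : SStable src s (restrictS s a.1)
      · exact ⟨0, a.1, FR.refl _, rfl, hst⟩
      · unfold SStable at hst
        push Not at hst
        obtain ⟨v, hv⟩ := hst
        have hv' : outdeg src v.1 ≤ a.1 v.1 := hv
        obtain ⟨x, d, h1, h2, h3⟩ := ih ⟨fire src tgt a.1 v.1, by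
          rw [lvl_fire _ _ _ _ hv', a.2]⟩ ⟨_, by
            intro h
            have := congrFun h v.1
            simp at this, by simp [Ne.symm v.2], FR.head v.1 hv' (FR.refl _)⟩
        exact ⟨_, d, FR.head v.1 hv' h1, by simp [h2, Ne.symm v.2], h3⟩
  exact key ⟨c, rfl⟩

theorem restrict_extend (s : V) (a : {v : V // v ≠ s} → ℕ) (k : ℕ) :
    restrictS s (extendS s a + k • deltaS s) = a := by
  funext v
  simp [restrictS, extendS, deltaS, v.2]

theorem sstab_unique {src tgt : E → V} {s : V} {a b b' : {v : V // v ≠ s} → ℕ}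
    (h : SReach src tgt s a b) (hb : SStable src s b) (h' : SReach src tgt s a b')
    (hb' : SStable src s b') : b = b' := by
  obtain ⟨x, d, h1, h2, rfl⟩ := h.lift_FR _ (restrict_extend s a 0)
  obtain ⟨y, e, h3, h4, rfl⟩ := h'.lift_FR _ (restrict_extend s a 0)
  obtain ⟨f, hf1, hf2⟩ := h3.diamond h1
  rw [← hf1.of_sstable (by simp [h4]) hb, ← hf2.of_sstable (by simp [h2]) hb']

section Sink

variable {src tgt : E → V} {s : V}

theorem stab_spec (hG : StronglyConnected src tgt) (a : {v : V // v ≠ s} → ℕ) :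
    SReach src tgt s a (stab src tgt s a) ∧ SStable src s (stab src tgt s a) := by
  apply Classical.epsilon_spec
    (p := fun d => SReach src tgt s a d ∧ SStable src s d)
  obtain ⟨x, d, h1, h2, h3⟩ := exists_sstab hG s (extendS s a + 0 • deltaS s)
  have := h1.project s
  rw [restrict_extend, h2, zero_smul, add_zero] at this
  exact ⟨_, this, h3⟩

theorem stab_eq (hG : StronglyConnected src tgt) {a b : {v : V // v ≠ s} → ℕ}
    (h : SReach src tgt s a b) (hb : SStable src s b) : stab src tgt s a = b :=
  sstab_unique (stab_spec hG a).1 (stab_spec hG a).2 h hb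

theorem stab_eq_of_reach (hG : StronglyConnected src tgt) {a b : {v : V // v ≠ s} → ℕ}
    (h : SReach src tgt s a b) : stab src tgt s a = stab src tgt s b :=
  stab_eq hG (h.trans (stab_spec hG b).1) (stab_spec hG b).2

theorem stab_stab_add (hG : StronglyConnected src tgt) (a b : {v : V // v ≠ s} → ℕ) :
    stab src tgt s (stab src tgt s a + b) = stab src tgt s (a + b) :=
  (stab_eq_of_reach hG ((stab_spec hG a).1.add b)).symm

theorem stab_of_stable (hG : StronglyConnected src tgt) {a : {v : V // v ≠ s} → ℕ}
    (h : SStable src s a) : stab src tgt s a = a :=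
  stab_eq hG Relation.ReflTransGen.refl h

theorem SRecurrent.stable (hG : StronglyConnected src tgt) {a : {v : V // v ≠ s} → ℕ}
    (h : SRecurrent src tgt s a) : SStable src s a := by
  obtain ⟨b, hb⟩ := h 0
  rw [← hb]
  exact (stab_spec hG _).2

theorem finite_sstable (src : E → V) (s : V) :
    Finite {a : {v : V // v ≠ s} → ℕ // SStable src s a} := by
  have : Set.Finite {a : {v : V // v ≠ s} → ℕ | SStable src s a} := by
    refine (Set.finite_Iic (fun v : {v : V // v ≠ s} => outdeg src v.1)).subset ?_
    intro c hc v
    exact (hc v).le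
  exact this.to_subtype

theorem finite_recS (hG : StronglyConnected src tgt) (s : V) : Finite (RecS src tgt s) := by
  have := finite_sstable src s
  exact Finite.of_injective
    (fun a : RecS src tgt s => (⟨a.1, a.2.stable hG⟩ : {a // SStable src s a}))
    (fun a b h => Subtype.ext (by simpa using h))

/-- Adding many chips at `s` allows covering any configuration. -/
theorem exists_cover (hG : StronglyConnected src tgt) (s : V) (c : V → ℕ) :
    ∃ (k : ℕ) (x d : V → ℕ), FR src tgt (k • deltaS s) x d ∧ c ≤ d := by
  have h1 : ∀ v, ∃ (k : ℕ) (x d : V → ℕ), FR src tgt (k • deltaS s) x d ∧ 1 ≤ d v := by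
    intro v
    have hv := hG s v
    induction hv with
    | refl => exact ⟨1, 0, _, FR.refl _, by simp [deltaS]⟩
    | @tail a b _ hab ih =>
      obtain ⟨k, x, d, h, hd⟩ := ih
      by_cases hb : b = a
      · subst hb; exact ⟨k, x, d, h, hd⟩
      · have h2 := h.smul (outdeg src a)
        have h3 : outdeg src a ≤ (outdeg src a • d) a := by
          simp only [Pi.smul_apply, smul_eq_mul]; nlinarith
        have h4 := h2.trans (FR.head a h3 (FR.refl _))
        rw [smul_smul] at h4
        refine ⟨_, _, _, h4, ?_⟩
        have := numEdges_pos hab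
        simp [fire, hb]
        omega
  choose k x d h hd using h1
  have h2 : ∀ S : Finset V, FR src tgt ((∑ v ∈ S, c v * k v) • deltaS s) (∑ v ∈ S, c v • x v)
      (∑ v ∈ S, c v • d v) := by
    intro S
    induction S using Finset.induction_on with
    | empty => simpa using FR.refl _
    | insert a S ha ih =>
      rw [Finset.sum_insert ha, Finset.sum_insert ha, Finset.sum_insert ha, add_smul, ← smul_smul]
      exact ((h a).smul _).mono_add ih
  refine ⟨_, _, _, h2 Finset.univ, fun v => ?_⟩
  rw [Finset.sum_apply]
  refine le_trans ?_ (Finset.single_le_sum (f := fun u => (c u • d u) v)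
    (fun _ _ => Nat.zero_le _) (Finset.mem_univ v))
  have := hd v
  simp only [Pi.smul_apply, smul_eq_mul]
  nlinarith

theorem exists_scover (hG : StronglyConnected src tgt) (s : V) (a : {v : V // v ≠ s} → ℕ) :
    ∃ (k : ℕ) (d : {v : V // v ≠ s} → ℕ), SReach src tgt s (k • betaS src tgt s) d ∧ a ≤ d := by
  obtain ⟨k, x, d, h, hd⟩ := exists_cover hG s (extendS s a)
  have h1 := h.project s
  refine ⟨x s, restrictS s d, ?_, ?_⟩
  · convert h1 using 1
    funext v
    simp [restrictS, deltaS, v.2]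
  · intro v
    have := hd v.1
    simpa [extendS, v.2, restrictS] using this

/-- An `s`-stable recurrent configuration restricts to an `s`-recurrent one. -/
theorem srecurrent_restrict (hG : StronglyConnected src tgt) {c : V → ℕ}
    (hc : Recurrent src tgt c) (hs : SStable src s (restrictS s c)) :
    SRecurrent src tgt s (restrictS s c) := by
  obtain ⟨p, hp, h⟩ := (recurrent_iff hG c).1 hc
  intro a
  obtain ⟨k, d, hk, hd⟩ := exists_scover hG s a
  obtain ⟨d', rfl⟩ := exists_add_of_le hd
  have h1 := (h.iter k).project s
  have hps := h.loop_pos hG hp s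
  obtain ⟨j, hj⟩ : ∃ j, (k • p) s = k + j := Nat.exists_eq_add_of_le (by
    simp only [Pi.smul_apply, smul_eq_mul]; nlinarith)
  rw [hj, add_smul] at h1
  have h2 := hk.add (restrictS s c + j • betaS src tgt s)
  have h3 := stab_eq hG h1 hs
  refine ⟨d' + (restrictS s c + j • betaS src tgt s), ?_⟩
  rw [← add_assoc, ← stab_eq_of_reach hG h2, ← h3]
  congr 1
  rw [h3]
  abel

theorem exists_period (hG : StronglyConnected src tgt) {a : {v : V // v ≠ s} → ℕ}
    (ha : SRecurrent src tgt s a) :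
    ∃ q : ℕ, 0 < q ∧ stab src tgt s (a + q • betaS src tgt s) = a := by
  have := finite_sstable src s
  let f : {a : {v : V // v ≠ s} → ℕ // SStable src s a} → {a // SStable src s a} :=
    fun d => ⟨stab src tgt s (d.1 + betaS src tgt s), (stab_spec hG _).2⟩
  have hf : ∀ (m : ℕ) d, (f^[m] d).1 = stab src tgt s (d.1 + m • betaS src tgt s) := by
    intro m
    induction m with
    | zero => intro d; simpa using (stab_of_stable hG d.2).symm
    | succ m ih =>
      intro d
      rw [Function.iterate_succ_apply']
      show stab src tgt s ((f^[m] d).1 + _) = _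
      rw [ih, stab_stab_add hG, succ_nsmul, add_assoc]
  have key : ∃ i j, i < j ∧ f^[i] = f^[j] := by
    obtain ⟨i, j, hne, h⟩ := Finite.exists_ne_map_eq_of_infinite (fun i : ℕ => f^[i])
    rcases lt_or_gt_of_ne hne with hlt | hlt
    · exact ⟨i, j, hlt, h⟩
    · exact ⟨j, i, hlt, h.symm⟩
  obtain ⟨i, j, hij, h⟩ := key
  obtain ⟨b, hb⟩ := ha (i • betaS src tgt s)
  have h1 := hf i ⟨stab src tgt s b, (stab_spec hG _).2⟩
  have h2 := hf j ⟨stab src tgt s b, (stab_spec hG _).2⟩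
  rw [h, h2] at h1
  simp only [stab_stab_add hG] at h1
  refine ⟨j - i, by omega, ?_⟩
  conv_lhs => rw [← hb]
  rw [stab_stab_add hG, ← hb, add_comm (i • _) b, ← h1]
  congr 1
  have : j = i + (j - i) := by omega
  conv_rhs => rw [this, add_smul]
  abel

theorem fire_s_many (src tgt : E → V) (s : V) (q : ℕ) : ∀ c : V → ℕ, q * outdeg src s ≤ c s →
    ∃ d, FR src tgt c (q • Pi.single s 1) d ∧
      restrictS s d = restrictS s c + q • betaS src tgt s := by
  induction q with
  | zero => intro c _; exact ⟨c, by simpa using FR.refl c, by simp⟩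
  | succ q ih =>
    intro c hc
    rw [add_mul, one_mul] at hc
    have hl : outdeg src s ≤ c s := by omega
    obtain ⟨d, h1, h2⟩ := ih (fire src tgt c s) (by
      have := fire_spec src tgt c s hl s
      simp at this
      omega)
    refine ⟨d, ?_, ?_⟩
    · rw [succ_nsmul]; exact FR.head s hl h1
    · rw [h2]
      funext v
      simp [restrictS, fire, v.2, betaS, add_mul]
      omega

theorem lvl_eq (s : V) (c : V → ℕ) : lvl c = c s + ∑ v : {v : V // v ≠ s}, restrictS s c v := by
  unfold lvl restrictS
  rw [Fintype.sum_eq_add_sum_subtype_ne c s]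

theorem eq_of_restrict {s : V} {c d : V → ℕ} (h : restrictS s c = restrictS s d)
    (hl : lvl c = lvl d) : c = d := by
  rw [lvl_eq s, lvl_eq s, h] at hl
  funext v
  by_cases hv : v = s
  · subst hv; omega
  · exact congrFun h ⟨v, hv⟩

theorem extend_apply_s (s : V) (a : {v : V // v ≠ s} → ℕ) (k : ℕ) :
    (extendS s a + k • deltaS s) s = k := by
  simp [extendS, deltaS]

theorem lvl_extend (s : V) (a : {v : V // v ≠ s} → ℕ) (k : ℕ) :
    lvl (extendS s a + k • deltaS s) = k + ∑ v, a v := by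
  rw [lvl_eq s, restrict_extend, extend_apply_s]

theorem exists_extend (s : V) (c : V → ℕ) :
    c = extendS s (restrictS s c) + (c s) • deltaS s := by
  apply eq_of_restrict (s := s)
  · rw [restrict_extend]
  · rw [lvl_extend, lvl_eq s]

theorem exists_recurrent_extend (hG : StronglyConnected src tgt) {a : {v : V // v ≠ s} → ℕ}
    (ha : SRecurrent src tgt s a) : ∃ k : ℕ, Recurrent src tgt (extendS s a + k • deltaS s) := by
  obtain ⟨q, hq, h⟩ := exists_period hG ha
  refine ⟨q * outdeg src s, ?_⟩
  set c := extendS s a + (q * outdeg src s) • deltaS s with hc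
  have hra : restrictS s c = a := restrict_extend _ _ _
  obtain ⟨d, h1, h2⟩ := fire_s_many src tgt s q c (by rw [hc, extend_apply_s])
  rw [hra] at h2
  have h3 := (stab_spec (s := s) hG (a + q • betaS src tgt s)).1
  rw [h] at h3
  obtain ⟨x, e, h4, h5, h6⟩ := h3.lift_FR d h2
  have h7 := h1.trans h4
  have : e = c := eq_of_restrict (h6.trans hra.symm) h7.lvl_eq
  rw [this] at h7
  refine (recurrent_iff hG c).2 ⟨_, ?_, h7⟩
  intro h0
  have := congrFun h0 s
  simp at this
  omega

theorem recurrent_extend_iff (hG : StronglyConnected src tgt) {a : {v : V // v ≠ s} → ℕ}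
    (ha : SRecurrent src tgt s a) (k : ℕ) :
    Recurrent src tgt (extendS s a + k • deltaS s) ↔ sIndex src tgt s a ≤ k := by
  have hne : {k : ℕ | Recurrent src tgt (extendS s a + k • deltaS s)}.Nonempty :=
    exists_recurrent_extend hG ha
  constructor
  · intro h; exact Nat.sInf_le h
  · intro h
    obtain ⟨j, rfl⟩ := Nat.exists_eq_add_of_le h
    have h1 : Recurrent src tgt (extendS s a + sIndex src tgt s a • deltaS s) :=
      Nat.sInf_mem hne
    rw [add_smul, ← add_assoc]
    exact h1.add hG _

theorem sequiv_of_reach (hG : StronglyConnected src tgt) {c d : V → ℕ}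
    (h : Reach src tgt c d) (hd : SStable src s (restrictS s d)) :
    SEquiv src tgt s (restrictS s c) (restrictS s d) := by
  obtain ⟨x, hx⟩ := h.exists_FR
  exact ⟨x s, stab_eq hG (hx.project s) hd⟩

theorem reach_of_sequiv (hG : StronglyConnected src tgt) {c : V → ℕ}
    (hc : Recurrent src tgt c) {b : {v : V // v ≠ s} → ℕ}
    (h : SEquiv src tgt s (restrictS s c) b) :
    ∃ d, Reach src tgt c d ∧ restrictS s d = b := by
  obtain ⟨m, hm⟩ := h
  obtain ⟨p, hp, hcp⟩ := (recurrent_iff hG c).1 hc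
  have hps := hcp.loop_pos hG hp s
  obtain ⟨x, e, h1, h2⟩ := (hcp.iter m).take_upto s m (by
    simp only [Pi.smul_apply, smul_eq_mul]; nlinarith)
  have h3 := h1.project s
  rw [h2] at h3
  have h4 := stab_eq_of_reach hG h3
  rw [hm] at h4
  have h5 := (stab_spec (s := s) hG (restrictS s e)).1
  rw [← h4] at h5
  obtain ⟨y, d, h6, _, h7⟩ := h5.lift_FR e rfl
  exact ⟨d, (h1.trans h6).reach, h7⟩

theorem sequiv_symm (hG : StronglyConnected src tgt) {a b : {v : V // v ≠ s} → ℕ}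
    (ha : SRecurrent src tgt s a) (h : SEquiv src tgt s a b) : SEquiv src tgt s b a := by
  obtain ⟨k, hk⟩ := exists_recurrent_extend hG ha
  have hr := restrict_extend s a k
  obtain ⟨d, h1, h2⟩ := reach_of_sequiv (s := s) hG hk (b := b) (by rwa [hr])
  have := sequiv_of_reach (s := s) hG (hk.2 d h1) (by rw [hr]; exact ha.stable hG)
  rwa [h2, hr] at this

theorem sequiv_trans (hG : StronglyConnected src tgt) {a b c : {v : V // v ≠ s} → ℕ}
    (h : SEquiv src tgt s a b) (h' : SEquiv src tgt s b c) : SEquiv src tgt s a c := by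
  obtain ⟨k, rfl⟩ := h
  obtain ⟨m, rfl⟩ := h'
  exact ⟨k + m, by rw [stab_stab_add hG, add_smul, add_assoc]⟩

theorem slvl_le_of_sequiv (hG : StronglyConnected src tgt) {a b : {v : V // v ≠ s} → ℕ}
    (ha : SRecurrent src tgt s a) (hb : SRecurrent src tgt s b) (h : SEquiv src tgt s a b) :
    slvl src tgt s b ≤ slvl src tgt s a := by
  have hk := (recurrent_extend_iff hG ha _).2 le_rfl
  have hr := restrict_extend s a (sIndex src tgt s a)
  obtain ⟨d, h1, h2⟩ := reach_of_sequiv (s := s) hG hk (b := b) (by rwa [hr])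
  have hd := hk.of_reach h1
  obtain ⟨x, hx⟩ := h1.exists_FR
  have hl := hx.lvl_eq
  rw [lvl_extend, lvl_eq s, h2] at hl
  rw [exists_extend s d, h2, recurrent_extend_iff hG hb] at hd
  unfold slvl
  omega

theorem slvl_eq_of_sequiv (hG : StronglyConnected src tgt) {a b : {v : V // v ≠ s} → ℕ}
    (ha : SRecurrent src tgt s a) (hb : SRecurrent src tgt s b) (h : SEquiv src tgt s a b) :
    slvl src tgt s b = slvl src tgt s a :=
  le_antisymm (slvl_le_of_sequiv hG ha hb h) (slvl_le_of_sequiv hG hb ha (sequiv_symm hG ha h))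

theorem mkS_eq_iff (hG : StronglyConnected src tgt) (a b : RecS src tgt s) :
    Quotient.mk (recSSetoid src tgt s) a = Quotient.mk (recSSetoid src tgt s) b ↔
      SEquiv src tgt s a.1 b.1 := by
  rw [Quotient.eq]
  constructor
  · intro h
    have h' : Relation.EqvGen (fun a b : RecS src tgt s => SEquiv src tgt s a.1 b.1) a b := h
    clear h
    induction h' with
    | rel _ _ h => exact h
    | refl x => exact ⟨0, by simpa using stab_of_stable hG (x.2.stable hG)⟩
    | symm x y _ ih => exact sequiv_symm hG x.2 ih
    | trans x y z _ _ ih1 ih2 => exact sequiv_trans hG ih1 ih2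
  · intro h
    exact Relation.EqvGen.rel _ _ h

theorem mkL_eq_iff (a b : RecL src tgt) :
    Quotient.mk (recLSetoid src tgt) a = Quotient.mk (recLSetoid src tgt) b ↔
      Reach src tgt a.1 b.1 := by
  rw [Quotient.eq]
  constructor
  · intro h
    have h' : Relation.EqvGen (fun a b : RecL src tgt => Reach src tgt a.1 b.1) a b := h
    clear h
    induction h' with
    | rel _ _ h => exact h
    | refl x => exact Relation.ReflTransGen.refl
    | symm x y _ ih => exact x.2.2 _ ih
    | trans x y z _ _ ih1 ih2 => exact Relation.ReflTransGen.trans ih1 ih2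
  · intro h
    exact Relation.EqvGen.rel _ _ h

theorem slvlClass_mk (hG : StronglyConnected src tgt) (a : RecS src tgt s) :
    slvlClass src tgt s (Quotient.mk _ a) = slvl src tgt s a.1 := by
  unfold slvlClass
  have : ((fun c : RecS src tgt s => slvl src tgt s c.1) ''
    {c | Quotient.mk (recSSetoid src tgt s) c = Quotient.mk _ a}) = {slvl src tgt s a.1} := by
    ext n
    simp only [Set.mem_image, Set.mem_ofPred_eq, Set.mem_singleton_iff]
    constructor
    · rintro ⟨b, hb, rfl⟩
      exact (slvl_eq_of_sequiv hG b.2 a.2 ((mkS_eq_iff hG b a).1 hb)).symm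
    · rintro rfl
      exact ⟨a, rfl, rfl⟩
  rw [this, csSup_singleton]

theorem lvlClass_mk (a : RecL src tgt) :
    lvlClass src tgt (Quotient.mk _ a) = lvl a.1 := by
  unfold lvlClass
  have : ((fun c : RecL src tgt => lvl c.1) ''
    {c | Quotient.mk (recLSetoid src tgt) c = Quotient.mk _ a}) = {lvl a.1} := by
    ext n
    simp only [Set.mem_image, Set.mem_ofPred_eq, Set.mem_singleton_iff]
    constructor
    · rintro ⟨b, hb, rfl⟩
      obtain ⟨x, hx⟩ := ((mkL_eq_iff b a).1 hb).exists_FR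
      exact hx.lvl_eq.symm
    · rintro rfl
      exact ⟨a, rfl, rfl⟩
  rw [this, csSup_singleton]

theorem card_le_eq (hG : StronglyConnected src tgt) (s : V) (n : ℕ) :
    Nat.card {q : RecLQuot src tgt // lvlClass src tgt q = n} =
      Nat.card {q : RecSQuot src tgt s // slvlClass src tgt s q ≤ n} := by
  symm
  have hout : ∀ q : RecSQuot src tgt s, slvlClass src tgt s q = slvl src tgt s q.out.1 := by
    intro q
    conv_lhs => rw [← Quotient.out_eq q]
    exact slvlClass_mk hG _
  have hrec : ∀ q : {q : RecSQuot src tgt s // slvlClass src tgt s q ≤ n},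
      Recurrent src tgt (extendS s q.1.out.1 + (n - ∑ v, q.1.out.1 v) • deltaS s) := by
    intro q
    rw [recurrent_extend_iff hG q.1.out.2]
    have := q.2
    rw [hout] at this
    unfold slvl at this
    omega
  let F : {q : RecSQuot src tgt s // slvlClass src tgt s q ≤ n} →
      {q : RecLQuot src tgt // lvlClass src tgt q = n} :=
    fun q => ⟨Quotient.mk _ ⟨_, hrec q⟩, by
      rw [lvlClass_mk, lvl_extend]
      have := q.2
      rw [hout] at this
      unfold slvl at this
      omega⟩
  refine Nat.card_eq_of_bijective F ⟨?_, ?_⟩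
  · intro q q' h
    have h1 := (mkL_eq_iff _ _).1 (Subtype.ext_iff.1 h)
    have h2 := sequiv_of_reach (s := s) hG h1 (by
      rw [restrict_extend]; exact q'.1.out.2.stable hG)
    rw [restrict_extend, restrict_extend] at h2
    have h3 := (mkS_eq_iff hG _ _).2 h2
    rw [Quotient.out_eq, Quotient.out_eq] at h3
    exact Subtype.ext h3
  · rintro ⟨q, hq⟩
    induction q using Quotient.inductionOn with
    | _ c =>
    rw [lvlClass_mk] at hq
    obtain ⟨x, d, h1, -, h3⟩ := exists_sstab hG s c.1
    have hd := c.2.of_reach h1.reach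
    have hds := srecurrent_restrict hG hd h3
    let q : RecSQuot src tgt s := Quotient.mk _ ⟨_, hds⟩
    have h4 : SEquiv src tgt s (restrictS s d) q.out.1 :=
      (mkS_eq_iff hG ⟨_, hds⟩ q.out).1 (Quotient.out_eq q).symm
    obtain ⟨e, h5, h6⟩ := reach_of_sequiv hG hd h4
    have he := hd.of_reach h5
    obtain ⟨y, hy⟩ := h5.exists_FR
    have hl : lvl e = n := by rw [hy.lvl_eq, h1.lvl_eq, hq]
    rw [exists_extend s e, h6, recurrent_extend_iff hG q.out.2] at he
    rw [lvl_eq s, h6] at hl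
    have hqn : slvlClass src tgt s q ≤ n := by
      rw [hout]; unfold slvl; omega
    refine ⟨⟨q, hqn⟩, Subtype.ext ?_⟩
    symm
    refine (mkL_eq_iff _ _).2 ?_
    have h7 : e = extendS s q.out.1 + (n - ∑ v, q.out.1 v) • deltaS s := by
      conv_lhs => rw [exists_extend s e, h6]
      congr 2
      omega
    have h8 := Relation.ReflTransGen.trans h1.reach h5
    rw [h7] at h8
    exact h8

theorem card_eq_sum (hG : StronglyConnected src tgt) (s : V) (n : ℕ) :
    Nat.card {q : RecLQuot src tgt // lvlClass src tgt q = n} =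
      ∑ m ∈ Finset.range (n + 1),
        Nat.card {q : RecSQuot src tgt s // slvlClass src tgt s q = m} := by
  rw [card_le_eq hG s n]
  have := finite_recS hG s
  have : Finite (RecSQuot src tgt s) := Quotient.finite _
  have := Fintype.ofFinite (RecSQuot src tgt s)
  classical
  simp only [Nat.card_eq_fintype_card, Fintype.card_subtype]
  rw [Finset.card_eq_sum_card_fiberwise (f := slvlClass src tgt s) (t := Finset.range (n + 1))
    (by intro q; simp)]
  refine Finset.sum_congr rfl fun m hm => ?_
  rw [Finset.filter_filter]
  congr 1
  ext q
  simp at hm ⊢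
  omega

theorem series_eq (hG : StronglyConnected src tgt) (s : V) :
    (1 - PowerSeries.X) * RcSeries src tgt = PcSeries src tgt s := by
  ext n
  rw [sub_mul, one_mul, map_sub]
  cases n with
  | zero =>
    rw [PowerSeries.coeff_zero_X_mul]
    simp only [RcSeries, PcSeries, PowerSeries.coeff_mk, card_eq_sum hG s]
    simp
  | succ n =>
    rw [PowerSeries.coeff_succ_X_mul]
    simp only [RcSeries, PcSeries, PowerSeries.coeff_mk, card_eq_sum hG s]
    rw [Finset.sum_range_succ _ (n + 1)]
    push_cast
    ring

end Sink

/-- `(1 − y)·Σ_n |Rec_n(G,~)| yⁿ = Σ_n |Rec_n(G,~_s)| yⁿ` in `ℤ[[y]]`;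
equivalently `|Rec_n(G,~)| = Σ_{m=0}^n |Rec_m(G,~_s)|` for all `n`; in particular
`Pc(G,s;y)` does not depend on the choice of `s`. -/
theorem rcSeries_eq_pcSeries [Nonempty V] (src tgt : E → V)
    (hG : StronglyConnected src tgt) (s : V) :
    (1 - PowerSeries.X) * RcSeries src tgt = PcSeries src tgt s ∧
    (∀ n : ℕ, Nat.card {q : RecLQuot src tgt // lvlClass src tgt q = n} =
      ∑ m ∈ Finset.range (n + 1),
        Nat.card {q : RecSQuot src tgt s // slvlClass src tgt s q = m}) ∧
    (∀ s' : V, PcSeries src tgt s = PcSeries src tgt s') := by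
  exact ⟨series_eq hG s, card_eq_sum hG s, fun s' => by
    rw [← series_eq hG s, ← series_eq hG s']⟩

end SandpileBM
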